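/- If V and W are graded representations of a finite group Γ that are both strongly equivariantly log concave in degrees ≤ m, then V ⊗ W is strongly equivariantly log concave in degrees ≤ m. -/

import Mathlib

open CategoryTheory MonoidalCategory

noncomputable section

/-- The external direct sum of a finite family of representations. -/
def Representation.pi' {k G : Type*} [CommSemiring k] [Monoid G] {ι : Type*}
    {M : ι → Type*} [∀ i, AddCommMonoid (M i)] [∀ i, Module k (M i)]
    (ρ : ∀ i, Representation k G (M i)) : Representation k G (∀ i, M i) where
  toFun g := LinearMap.pi fun i => (ρ i g) ∘ₗ LinearMap.proj i
  map_one' := by ext; simp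
  map_mul' g h := by ext; simp

variable {G : Type} [Group G] [Fintype G]

/-- `X` is isomorphic to a subrepresentation of `Y`. -/
def IsSubrep (X Y : FDRep ℚ G) : Prop := ∃ f : X ⟶ Y, Mono f

/-- A graded representation is strongly equivariantly log concave in degrees `≤ m` if
`V^i ⊗ V^l` is isomorphic to a subrepresentation of `V^j ⊗ V^k` whenever
`i ≤ j ≤ k ≤ l` and `j + k = i + l ≤ m`. -/
def StrongELCle (V : ℕ → FDRep ℚ G) (m : ℕ) : Prop :=
  ∀ i j k l : ℕ, i ≤ j → j ≤ k → k ≤ l → j + k = i + l → j + k ≤ m →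
    IsSubrep (V i ⊗ V l) (V j ⊗ V k)

/-- The degree-`m` piece `⊕_{p+q=m} V^p ⊗ W^q` of the tensor product of two graded
representations. -/
def gradedTensor (V W : ℕ → FDRep ℚ G) (m : ℕ) : FDRep ℚ G :=
  FDRep.of (Representation.pi' fun p : Fin (m + 1) =>
    Representation.tprod (V p).ρ (W (m - (p : ℕ))).ρ)

/-!
The argument has two halves. Over a field of characteristic zero, characters determine the
representations of a finite group, so `X` embeds into `Y` exactly when the difference of their
characters is again a character; strong equivariant log concavity of `V` thereby becomes strong log
concavity of the generating series of the characters of `V`, relative to the cone of characters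
inside the ring of functions on the group, and tensor products become products of series.

For power series, strong log concavity says that certain `2 × 2` minors of the lower triangular
Toeplitz matrix of coefficients lie in the cone. The Toeplitz matrix of a product is the product of
the Toeplitz matrices, so by the Cauchy–Binet formula its minors are sums of products of such minors
of the two factors, and the cone is closed under sums and products.
-/

section LogConcavePowerSeries

open PowerSeries Finset

variable {R : Type*} [CommRing R]

/-- A power series is strongly log concave in degrees `≤ m`, relative to a cone `P` of
nonnegative elements of the coefficient ring, if `f_j f_k - f_i f_l ∈ P` whenever
`i ≤ j ≤ k ≤ l` and `j + k = i + l ≤ m`. -/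
def IsStronglyLogConcave (P : NonUnitalSubsemiring R) (f : R⟦X⟧) (m : ℕ) : Prop :=
  ∀ i j k l : ℕ, i ≤ j → j ≤ k → k ≤ l → j + k = i + l → j + k ≤ m →
    coeff j f * coeff k f - coeff i f * coeff l f ∈ P

/-- The entry `f_{r - s}` in row `r` and column `s` of the lower triangular Toeplitz matrix of the
power series `f`; it is `0` for `r < s`. -/
def toeplitzEntry (f : R⟦X⟧) (r s : ℕ) : R := coeff r (X ^ s * f)

/-- The minor of the Toeplitz matrix of `f` on the rows `r, r'` and the columns `s, s'`. -/
def toeplitzMinor (f : R⟦X⟧) (r r' s s' : ℕ) : R :=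
  toeplitzEntry f r s * toeplitzEntry f r' s' - toeplitzEntry f r s' * toeplitzEntry f r' s

theorem toeplitzEntry_of_le (f : R⟦X⟧) {r s : ℕ} (h : s ≤ r) :
    toeplitzEntry f r s = coeff (r - s) f := by
  rw [toeplitzEntry, coeff_X_pow_mul', if_pos h]

theorem toeplitzEntry_of_lt (f : R⟦X⟧) {r s : ℕ} (h : r < s) : toeplitzEntry f r s = 0 := by
  rw [toeplitzEntry, coeff_X_pow_mul', if_neg h.not_ge]

theorem toeplitzEntry_mem {P : NonUnitalSubsemiring R} {f : R⟦X⟧} (hf : ∀ n, coeff n f ∈ P)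
    (r s : ℕ) : toeplitzEntry f r s ∈ P := by
  rw [toeplitzEntry, coeff_X_pow_mul']
  split_ifs
  exacts [hf _, zero_mem P]

theorem toeplitzEntry_mul (f g : R⟦X⟧) {r N : ℕ} (hr : r < N) (t : ℕ) :
    toeplitzEntry (f * g) r t = ∑ s ∈ range N, toeplitzEntry f r s * toeplitzEntry g s t := by
  calc toeplitzEntry (f * g) r t
      = coeff r (X ^ t * g * f) := by rw [toeplitzEntry, mul_comm f, mul_assoc]
    _ = ∑ s ∈ range (r + 1), toeplitzEntry g s t * coeff (r - s) f := by
        rw [coeff_mul]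
        exact Nat.sum_antidiagonal_eq_sum_range_succ (fun s q => toeplitzEntry g s t * coeff q f) r
    _ = ∑ s ∈ range (r + 1), toeplitzEntry f r s * toeplitzEntry g s t :=
        sum_congr rfl fun s hs => by
          rw [toeplitzEntry_of_le f (mem_range_succ_iff.1 hs), mul_comm]
    _ = ∑ s ∈ range N, toeplitzEntry f r s * toeplitzEntry g s t :=
        sum_subset (range_subset_range.2 hr) fun s _ hs => by
          rw [toeplitzEntry_of_lt f (by simpa using hs), zero_mul]

theorem toeplitzMinor_eq_zero (f : R⟦X⟧) {r r' s s' : ℕ} (h : r + r' < s + s') :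
    toeplitzMinor f r r' s s' = 0 := by
  have mul_eq_zero_of_lt {x y : ℕ} (hxy : r + r' < x + y) :
      toeplitzEntry f r x * toeplitzEntry f r' y = 0 := by
    rcases lt_or_ge r x with hx | hx
    · rw [toeplitzEntry_of_lt f hx, zero_mul]
    · rw [toeplitzEntry_of_lt f (by omega : r' < y), mul_zero]
  rw [toeplitzMinor, mul_eq_zero_of_lt h, mul_eq_zero_of_lt (by omega), sub_zero]

theorem IsStronglyLogConcave.toeplitzMinor_mem {P : NonUnitalSubsemiring R} {f : R⟦X⟧} {m : ℕ}
    (h : IsStronglyLogConcave P f m) (hf : ∀ n, coeff n f ∈ P) {r r' s s' : ℕ}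
    (hr : r ≤ r') (hs : s ≤ s') (hm : r + r' ≤ m + (s + s')) :
    toeplitzMinor f r r' s s' ∈ P := by
  rw [toeplitzMinor]
  rcases lt_or_ge r s' with hrs | hrs
  · rw [toeplitzEntry_of_lt f hrs, zero_mul, sub_zero]
    exact mul_mem (toeplitzEntry_mem hf r s) (toeplitzEntry_mem hf r' s')
  · rw [toeplitzEntry_of_le f (hs.trans hrs), toeplitzEntry_of_le f (hrs.trans hr),
      toeplitzEntry_of_le f hrs, toeplitzEntry_of_le f (hs.trans (hrs.trans hr))]
    rcases le_total (r - s) (r' - s') with hle | hle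
    · exact h _ _ _ _ (by omega) hle (by omega) (by omega) (by omega)
    · rw [mul_comm (coeff (r - s) f)]
      exact h _ _ _ _ (by omega) hle (by omega) (by omega) (by omega)

theorem sum_mul_sum_sub_sum_mul_sum_eq_sum_minors (u u' v v' : ℕ → R) (N : ℕ) :
    (∑ s ∈ range N, u s * v s) * (∑ s ∈ range N, u' s * v' s) -
        (∑ s ∈ range N, u s * v' s) * (∑ s ∈ range N, u' s * v s) =
      ∑ t ∈ range N, ∑ s ∈ range t,
        (u s * u' t - u t * u' s) * (v s * v' t - v' s * v t) := by
  induction N with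
  | zero => simp
  | succ N ih =>
    have last_column : ∑ s ∈ range N, (u s * u' N - u N * u' s) * (v s * v' N - v' s * v N) =
        (∑ s ∈ range N, u s * v s) * (u' N * v' N) + u N * v N * (∑ s ∈ range N, u' s * v' s) -
          (∑ s ∈ range N, u s * v' s) * (u' N * v N) -
            u N * v' N * (∑ s ∈ range N, u' s * v s) := by
      simp only [sum_mul, mul_sum, ← sum_add_distrib, ← sum_sub_distrib]
      exact sum_congr rfl fun s _ => by ring
    rw [sum_range_succ (fun t => ∑ s ∈ range t, _), ← ih, last_column]
    simp only [sum_range_succ]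
    ring

theorem toeplitzMinor_mul (f g : R⟦X⟧) {r r' N : ℕ} (hr : r < N) (hr' : r' < N) (t t' : ℕ) :
    toeplitzMinor (f * g) r r' t t' =
      ∑ s' ∈ range N, ∑ s ∈ range s', toeplitzMinor f r r' s s' * toeplitzMinor g s s' t t' := by
  simp only [toeplitzMinor, toeplitzEntry_mul f g hr, toeplitzEntry_mul f g hr']
  exact sum_mul_sum_sub_sum_mul_sum_eq_sum_minors _ _ _ _ N

theorem IsStronglyLogConcave.mul {P : NonUnitalSubsemiring R} {f g : R⟦X⟧} {m : ℕ}
    (hf : IsStronglyLogConcave P f m) (hg : IsStronglyLogConcave P g m)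
    (hfP : ∀ n, coeff n f ∈ P) (hgP : ∀ n, coeff n g ∈ P) :
    IsStronglyLogConcave P (f * g) m := by
  intro i j k l hij hjk _ hsum hm
  -- The rows `j ≤ l` and columns `0 ≤ j - i` cut out the entries of degrees `j, i, l, k`.
  have minor_eq : toeplitzMinor (f * g) j l 0 (j - i) =
      coeff j (f * g) * coeff k (f * g) - coeff i (f * g) * coeff l (f * g) := by
    rw [toeplitzMinor, toeplitzEntry_of_le _ j.zero_le, toeplitzEntry_of_le _ l.zero_le,
      toeplitzEntry_of_le _ (j.sub_le i), toeplitzEntry_of_le _ (by omega : j - i ≤ l),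
      Nat.sub_zero, Nat.sub_zero, Nat.sub_sub_self hij, (by omega : l - (j - i) = k)]
  rw [← minor_eq, toeplitzMinor_mul f g (by omega : j < l + 1) l.lt_succ_self]
  refine sum_mem fun s' _ => sum_mem fun s hs => ?_
  have hss' : s ≤ s' := (mem_range.1 hs).le
  -- The degrees of the two minors add up to `j + k`, so if neither is negative, both are `≤ m`.
  rcases lt_or_ge (j + l) (s + s') with hneg | hf_deg
  · rw [toeplitzMinor_eq_zero f hneg, zero_mul]
    exact zero_mem P
  rcases lt_or_ge (s + s') (0 + (j - i)) with hneg | hg_deg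
  · rw [toeplitzMinor_eq_zero g hneg, mul_zero]
    exact zero_mem P
  exact mul_mem (hf.toeplitzMinor_mem hfP (by omega) hss' (by omega))
    (hg.toeplitzMinor_mem hgP hss' (by omega) (by omega))

end LogConcavePowerSeries

section Decomposition

open Representation

variable {k Γ V W V' W' : Type*} [Ring k] [Monoid Γ]
  [AddCommGroup V] [Module k V] [AddCommGroup W] [Module k W]
  [AddCommGroup V'] [Module k V'] [AddCommGroup W'] [Module k W']
  {ρ : Representation k Γ V} {σ : Representation k Γ W}
  {ρ' : Representation k Γ V'} {σ' : Representation k Γ W'}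

theorem isCompl_toSubmodule {A B : Subrepresentation ρ} (h : IsCompl A B) :
    IsCompl A.toSubmodule B.toSubmodule where
  disjoint := by
    rw [disjoint_iff, ← Subrepresentation.toSubmodule_inf, h.inf_eq_bot]
    rfl
  codisjoint := by
    rw [codisjoint_iff, ← Subrepresentation.toSubmodule_sup, h.sup_eq_top]
    rfl

/-- A representation is the direct sum of any two complementary subrepresentations. -/
def prodEquivOfIsCompl {A B : Subrepresentation ρ} (h : IsCompl A B) :
    (A.toRepresentation.prod B.toRepresentation).Equiv ρ :=
  .mk (Submodule.prodEquivOfIsCompl _ _ (isCompl_toSubmodule h)) fun g => LinearMap.ext fun v => by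
    simp [Subrepresentation.toRepresentation]

/-- The direct sum of two isomorphisms of representations. -/
def prodCongrEquiv (φ : ρ.Equiv ρ') (ψ : σ.Equiv σ') : (ρ.prod σ).Equiv (ρ'.prod σ') :=
  .mk (φ.toLinearEquiv.prodCongr ψ.toLinearEquiv) fun g => LinearMap.ext fun v =>
    Prod.ext (φ.isIntertwining ρ ρ' g v.1) (ψ.isIntertwining σ σ' g v.2)

/-- First isomorphism theorem, with the quotient by the kernel replaced by a complement of it. -/
def kerComplementEquivRange (f : IntertwiningMap ρ σ) {C : Subrepresentation ρ}
    (h : IsCompl C f.ker) : C.toRepresentation.Equiv f.range.toRepresentation :=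
  .mk (f.toLinearMap.kerComplementEquivRange (isCompl_toSubmodule h)) fun g =>
    LinearMap.ext fun v => Subtype.ext (f.isIntertwining ρ σ g v)

/-- An injective intertwining map is an isomorphism onto its range. -/
def equivRangeOfInjective (f : IntertwiningMap ρ σ) (hf : Function.Injective f) :
    ρ.Equiv f.range.toRepresentation :=
  .mk (LinearEquiv.ofInjective f.toLinearMap hf) fun g =>
    LinearMap.ext fun v => Subtype.ext (f.isIntertwining ρ σ g v)

end Decomposition

section Characters

open Representation

variable {k Γ V W : Type*} [Field k]
  [AddCommGroup V] [Module k V] [FiniteDimensional k V]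
  [AddCommGroup W] [Module k W] [FiniteDimensional k W]

theorem trace_pi_comp_proj {R ι : Type*} [CommRing R] [Fintype ι] {M : ι → Type*}
    [∀ i, AddCommGroup (M i)] [∀ i, Module R (M i)] [∀ i, Module.Free R (M i)]
    [∀ i, Module.Finite R (M i)] (f : ∀ i, M i →ₗ[R] M i) :
    LinearMap.trace R _ (LinearMap.pi fun i => f i ∘ₗ LinearMap.proj i) =
      ∑ i, LinearMap.trace R _ (f i) := by
  classical
  have eq_sum : LinearMap.pi (fun i => f i ∘ₗ LinearMap.proj i) =
      ∑ i, LinearMap.single R M i ∘ₗ f i ∘ₗ LinearMap.proj i := by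
    ext i x j
    simp [Finset.sum_apply]
  rw [eq_sum, map_sum]
  refine Finset.sum_congr rfl fun i _ => ?_
  rw [LinearMap.trace_comp_comm', LinearMap.comp_assoc, LinearMap.proj_comp_single_same,
    LinearMap.comp_id]

theorem character_prod [Monoid Γ] (ρ : Representation k Γ V) (σ : Representation k Γ W) :
    (ρ.prod σ).character = ρ.character + σ.character :=
  funext fun g => LinearMap.trace_prodMap' (ρ g) (σ g)

theorem character_eq_add_of_isCompl [Monoid Γ] {ρ : Representation k Γ V}
    {A B : Subrepresentation ρ} (h : IsCompl A B) :
    ρ.character = A.toRepresentation.character + B.toRepresentation.character := by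
  rw [← char_iso (prodEquivOfIsCompl h), character_prod]

theorem exists_character_eq_add_of_injective [Monoid Γ] {U : Type*} [AddCommGroup U] [Module k U]
    {ρ : Representation k Γ U} {σ : Representation k Γ V} [IsSemisimpleRepresentation σ]
    {f : IntertwiningMap ρ σ} (hf : Function.Injective f) :
    ∃ A : Subrepresentation σ, σ.character = ρ.character + A.toRepresentation.character := by
  obtain ⟨A, hA⟩ := exists_isCompl f.range
  exact ⟨A, by rw [character_eq_add_of_isCompl hA, char_iso (equivRangeOfInjective f hf)]⟩

variable [Group Γ] [Finite Γ] [CharZero k] {ρ : Representation k Γ V} {σ : Representation k Γ W}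

theorem finrank_intertwiningMap_eq_of_character_eq (h : ρ.character = σ.character) :
    Module.finrank k (IntertwiningMap ρ ρ) = Module.finrank k (IntertwiningMap ρ σ) := by
  have := Fintype.ofFinite Γ
  have : Invertible (Nat.card Γ : k) := invertibleOfNonzero (NeZero.ne _)
  rw [← Nat.cast_inj (R := k), ← card_inv_mul_sum_char_mul_char_eq_finrank ρ ρ,
    ← card_inv_mul_sum_char_mul_char_eq_finrank ρ σ, h]

theorem exists_intertwiningMap_ne_zero_of_character_eq [Nontrivial V]
    (h : ρ.character = σ.character) : ∃ f : IntertwiningMap ρ σ, f ≠ 0 := by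
  have : Nontrivial (IntertwiningMap ρ ρ) := by
    obtain ⟨v, hv⟩ := exists_ne (0 : V)
    exact ⟨.id ρ, 0, fun hid => hv (DFunLike.congr_fun hid v)⟩
  have : Nontrivial (IntertwiningMap ρ σ) := Module.nontrivial_of_finrank_pos (R := k) <| by
    rw [← finrank_intertwiningMap_eq_of_character_eq h]
    exact Module.finrank_pos
  exact exists_ne 0

theorem nonempty_equiv_of_character_eq (h : ρ.character = σ.character) :
    Nonempty (ρ.Equiv σ) := by
  induction hn : Module.finrank k V using Nat.strong_induction_on generalizing V W with
  | _ n ih =>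
  rcases subsingleton_or_nontrivial V with hV | hV
  · have finrank_eq : Module.finrank k V = Module.finrank k W := by
      rw [← Nat.cast_inj (R := k), ← char_one ρ, ← char_one σ, h]
    have : Subsingleton W := Module.finrank_zero_iff.1 <|
      finrank_eq.symm.trans (Module.finrank_zero_of_subsingleton (R := k) (M := V))
    exact ⟨.mk 0 fun _ => Subsingleton.elim _ _⟩
  -- Both sides contain a copy of the range of a nonzero map; cancel it.
  · obtain ⟨f, hf⟩ := exists_intertwiningMap_ne_zero_of_character_eq h
    obtain ⟨C, hC⟩ := exists_isCompl f.ker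
    obtain ⟨D, hD⟩ := exists_isCompl f.range
    have character_ker_eq : f.ker.toRepresentation.character = D.toRepresentation.character := by
      rw [character_eq_add_of_isCompl hC, character_eq_add_of_isCompl hD.symm,
        char_iso (kerComplementEquivRange f hC.symm)] at h
      exact add_right_cancel h
    have finrank_ker_lt : Module.finrank k f.ker.toSubmodule < n := hn ▸
      Submodule.finrank_lt fun htop => hf <| IntertwiningMap.ext <| LinearMap.ker_eq_top.1 htop
    obtain ⟨φ⟩ := ih _ finrank_ker_lt character_ker_eq rfl
    exact ⟨(prodEquivOfIsCompl hC).symm.trans <|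
      (prodCongrEquiv φ (kerComplementEquivRange f hC.symm)).trans (prodEquivOfIsCompl hD.symm)⟩

theorem exists_injective_of_character_eq_add {U : Type*} [AddCommGroup U] [Module k U]
    [FiniteDimensional k U] {τ : Representation k Γ U}
    (h : σ.character = ρ.character + τ.character) :
    ∃ f : IntertwiningMap ρ σ, Function.Injective f := by
  obtain ⟨φ⟩ := nonempty_equiv_of_character_eq ((character_prod ρ τ).trans h.symm)
  exact ⟨φ.toIntertwiningMap.comp (.inl k ρ τ), φ.injective.comp LinearMap.inl_injective⟩

end Characters

section GradedRepresentations

universe u v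

variable {k : Type u} [Field k] {Γ : Type v} [Monoid Γ]

/-- `X` is isomorphic to a subrepresentation of `Y`: this is `IsSubrep` over an arbitrary field. -/
def EmbedsInto (X Y : FDRep k Γ) : Prop := ∃ f : X ⟶ Y, Mono f

/-- Strong equivariant log concavity in degrees `≤ m`: this is `StrongELCle` over an arbitrary
field. -/
def IsStronglyELC (V : ℕ → FDRep k Γ) (m : ℕ) : Prop :=
  ∀ i j p q : ℕ, i ≤ j → j ≤ p → p ≤ q → j + p = i + q → j + p ≤ m →
    EmbedsInto (V i ⊗ V q) (V j ⊗ V p)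

/-- The degree-`n` piece `⊕_{p+q=n} V^p ⊗ W^q` of the tensor product of graded representations:
this is `gradedTensor` over an arbitrary field. -/
def tensorPiece (V W : ℕ → FDRep k Γ) (n : ℕ) : FDRep k Γ :=
  FDRep.of (Representation.pi' fun p : Fin (n + 1) =>
    Representation.tprod (V p).ρ (W (n - (p : ℕ))).ρ)

variable (k Γ) in
/-- The characters of the finite-dimensional representations of `Γ`, as a cone in the ring of
functions on `Γ`. -/
def characterCone : NonUnitalSubsemiring (Γ → k) where
  carrier := Set.range (FDRep.character (k := k) (G := Γ))
  zero_mem' := ⟨FDRep.of (Representation.trivial k Γ PUnit.{u + 1}), funext fun _ =>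
    (congrArg (LinearMap.trace k _) (Subsingleton.elim _ 0)).trans (map_zero _)⟩
  add_mem' := by
    rintro _ _ ⟨X, rfl⟩ ⟨Y, rfl⟩
    exact ⟨FDRep.of (Representation.prod X.ρ Y.ρ), character_prod (V := X) (W := Y) X.ρ Y.ρ⟩
  mul_mem' := by
    rintro _ _ ⟨X, rfl⟩ ⟨Y, rfl⟩
    exact ⟨X ⊗ Y, FDRep.char_tensor X Y⟩

/-- The generating series of the characters of a graded representation. -/
def characterSeries (V : ℕ → FDRep k Γ) : PowerSeries (Γ → k) :=
  PowerSeries.mk fun n => (V n).character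

theorem coeff_characterSeries (V : ℕ → FDRep k Γ) (n : ℕ) :
    PowerSeries.coeff n (characterSeries V) = (V n).character :=
  PowerSeries.coeff_mk n _

theorem coeff_characterSeries_mem (V : ℕ → FDRep k Γ) (n : ℕ) :
    PowerSeries.coeff n (characterSeries V) ∈ characterCone k Γ :=
  ⟨V n, (coeff_characterSeries V n).symm⟩

theorem character_tensorPiece (V W : ℕ → FDRep k Γ) (n : ℕ) :
    (tensorPiece V W n).character =
      ∑ p : Fin (n + 1), (V p).character * (W (n - (p : ℕ))).character := by
  ext g
  rw [Finset.sum_apply]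
  exact (trace_pi_comp_proj fun p : Fin (n + 1) =>
      Representation.tprod (V p).ρ (W (n - (p : ℕ))).ρ g).trans <|
    Finset.sum_congr rfl fun p _ => LinearMap.trace_tensorProduct' _ _

theorem characterSeries_tensorPiece (V W : ℕ → FDRep k Γ) :
    characterSeries (tensorPiece V W) = characterSeries V * characterSeries W := by
  ext1 n
  simp only [PowerSeries.coeff_mul, coeff_characterSeries, character_tensorPiece]
  rw [Finset.Nat.sum_antidiagonal_eq_sum_range_succ fun p q => (V p).character * (W q).character,
    Finset.sum_range]

theorem embedsInto_iff_exists_injective (X Y : FDRep k Γ) :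
    EmbedsInto X Y ↔
      ∃ f : Representation.IntertwiningMap (V := X) (W := Y) X.ρ Y.ρ, Function.Injective f := by
  let F := forget₂ (FDRep k Γ) (Rep k Γ)
  constructor
  · rintro ⟨f, _⟩
    exact ⟨(F.map f).hom, (Rep.mono_iff_injective (F.map f)).1 inferInstance⟩
  · rintro ⟨f, hf⟩
    let f' : F.obj X ⟶ F.obj Y := Rep.ofHom f
    have : Mono (F.map (F.preimage f')) := by
      rw [F.map_preimage]
      exact (Rep.mono_iff_injective f').2 hf
    exact ⟨F.preimage f', F.mono_of_mono_map this⟩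

end GradedRepresentations

section FiniteGroup

universe u v

variable {k : Type u} [Field k] [CharZero k] {Γ : Type v} [Group Γ] [Finite Γ]

theorem embedsInto_iff_character_sub_mem (X Y : FDRep k Γ) :
    EmbedsInto X Y ↔ Y.character - X.character ∈ characterCone k Γ := by
  rw [embedsInto_iff_exists_injective]
  constructor
  · rintro ⟨f, hf⟩
    obtain ⟨A, hA⟩ := exists_character_eq_add_of_injective hf
    exact ⟨FDRep.of A.toRepresentation, eq_sub_of_add_eq' hA.symm⟩
  · rintro ⟨Z, hZ⟩
    exact exists_injective_of_character_eq_add (U := Z) (τ := Z.ρ) (add_eq_of_eq_sub' hZ).symm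

theorem isStronglyELC_iff_isStronglyLogConcave (V : ℕ → FDRep k Γ) (m : ℕ) :
    IsStronglyELC V m ↔ IsStronglyLogConcave (characterCone k Γ) (characterSeries V) m := by
  simp only [IsStronglyELC, IsStronglyLogConcave, embedsInto_iff_character_sub_mem,
    FDRep.char_tensor, coeff_characterSeries]

theorem stmt6_general (m : ℕ) (V W : ℕ → FDRep k Γ) (hV : IsStronglyELC V m)
    (hW : IsStronglyELC W m) : IsStronglyELC (tensorPiece V W) m := by
  rw [isStronglyELC_iff_isStronglyLogConcave] at hV hW ⊢
  rw [characterSeries_tensorPiece]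
  exact hV.mul hW (coeff_characterSeries_mem V) (coeff_characterSeries_mem W)

end FiniteGroup

/-- If `V` and `W` are graded representations of a finite group `G` that are both
strongly equivariantly log concave in degrees `≤ m`, then so is `V ⊗ W`. -/
theorem stmt6 (m : ℕ) (V W : ℕ → FDRep ℚ G) (hV : StrongELCle V m) (hW : StrongELCle W m) :
    StrongELCle (gradedTensor V W) m :=
  stmt6_general m V W hV hW

end
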